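/- Let α ∈ [0, 1/2) and let M = (M_y) be a quantum measurement that is α-gentle on all density matrices of ℂ^d. Then M is δ-quantum-differentially-private with δ = 2 log((1+2α)/(1−2α)): for all density matrices ρ₁, ρ₂ and all y, Tr[ρ₁ M_y*M_y] ≤ e^δ Tr[ρ₂ M_y*M_y]. -/

import Mathlib

open Matrix BigOperators ComplexOrder

/-!
Let `W` be an observable with values in `[-1, 1]` that separates two states `ρ₁`, `ρ₂` perfectly.
Gentleness says that the outcome moves the expectation of `W` by at most `2α`. Apply this to `ρ₁`,
`ρ₂` and the mixture `q ρ₁ + (1 - q) ρ₂`: up to the displacements of `ρ₁` and `ρ₂`, observing the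
outcome replaces the weights `(q, 1 - q)` by the posterior weights `∝ (q p₁, (1 - q) p₂)`, where
`pᵢ` is the probability of the outcome in `ρᵢ`. The prior `q = √p₂ / (√p₁ + √p₂)` moves the most,
and the resulting bound is `√p₁ - √p₂ ≤ 2α (√p₁ + √p₂)`. Distinct eigenvectors of `Nᴴ N` are
perfectly distinguishable, so this compares any two eigenvalues of `Nᴴ N`; the outcome
probabilities of arbitrary states are averages of these eigenvalues.
-/

lemma le_sq_mul_of_forall_mul_sub_le {a b c : ℝ} (hb : 0 ≤ b) (hc : c < 1)
    (h : ∀ q ∈ Set.Icc (0 : ℝ) 1, q * (1 - q) * (a - b) ≤ c * (q * a + (1 - q) * b)) :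
    a ≤ ((1 + c) / (1 - c)) ^ 2 * b := by
  have hc' : 0 < 1 - c := sub_pos.mpr hc
  rcases le_or_gt a 0 with ha | ha
  · exact ha.trans (by positivity)
  rcases hb.eq_or_lt with rfl | hb
  · obtain ⟨q, hq_pos, hq_lt⟩ := exists_between (lt_min one_pos hc')
    have hq : q * a * (1 - q - c) ≤ 0 := by
      linarith [h q ⟨hq_pos.le, (hq_lt.trans_le (min_le_left _ _)).le⟩]
    have hpos : 0 < q * a * (1 - q - c) :=
      mul_pos (mul_pos hq_pos ha) (by linarith [hq_lt.trans_le (min_le_right _ _)])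
    exact absurd hq hpos.not_ge
  obtain ⟨s, hs, rfl⟩ : ∃ s : ℝ, 0 < s ∧ s ^ 2 = a := ⟨√a, Real.sqrt_pos.mpr ha, Real.sq_sqrt ha.le⟩
  obtain ⟨t, ht, rfl⟩ : ∃ t : ℝ, 0 < t ∧ t ^ 2 = b := ⟨√b, Real.sqrt_pos.mpr hb, Real.sq_sqrt hb.le⟩
  have hq := h (t / (s + t)) ⟨by positivity, (div_le_one (by positivity)).mpr (by linarith)⟩
  have hst : s - t ≤ c * (s + t) := by
    have hl : t / (s + t) * (1 - t / (s + t)) * (s ^ 2 - t ^ 2) = s * t / (s + t) * (s - t) := by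
      field_simp
      ring
    have hr : c * (t / (s + t) * s ^ 2 + (1 - t / (s + t)) * t ^ 2) =
        s * t / (s + t) * (c * (s + t)) := by
      field_simp
      ring
    rw [hl, hr] at hq
    exact le_of_mul_le_mul_left hq (by positivity)
  have hratio : s ≤ (1 + c) / (1 - c) * t := by
    rw [div_mul_eq_mul_div, le_div_iff₀ hc']
    linarith
  rw [← mul_pow]
  exact pow_le_pow_left₀ hs.le hratio 2

section QuantumStates

variable {𝕜 n : Type*} [RCLike 𝕜] [Fintype n]

/-- The density matrices, i.e. the states of the system with Hilbert space `𝕜ⁿ`. -/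
structure IsDensityMatrix (ρ : Matrix n n 𝕜) : Prop where
  posSemidef : ρ.PosSemidef
  trace_eq_one : ρ.trace = 1

/-- The expectation `Tr[ρ A]` of the observable `A` in the state `ρ`. Only the real part is kept,
which loses nothing when `ρ` and `A` are Hermitian. -/
def expectation (ρ A : Matrix n n 𝕜) : ℝ := RCLike.re (ρ * A).trace

/-- The rank-one matrix `|x⟩⟨x|`, which is the pure state of `x` when `x` is a unit vector. -/
def pureState (x : n → 𝕜) : Matrix n n 𝕜 := vecMulVec x (star x)

/-- Observables with expectation in `[-1, 1]` in every state; by duality these test the trace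
norm. -/
def IsTestObservable (W : Matrix n n 𝕜) : Prop :=
  ∀ ρ : Matrix n n 𝕜, IsDensityMatrix ρ → |expectation ρ W| ≤ 1

/-- The probability of the outcome with measurement operator `N` in the state `ρ`. -/
def outcomeProb (N ρ : Matrix n n 𝕜) : ℝ := expectation ρ (Nᴴ * N)

lemma expectation_add_left (ρ σ A : Matrix n n 𝕜) :
    expectation (ρ + σ) A = expectation ρ A + expectation σ A := by
  simp only [expectation, add_mul, trace_add, map_add]

lemma expectation_sub_left (ρ σ A : Matrix n n 𝕜) :
    expectation (ρ - σ) A = expectation ρ A - expectation σ A := by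
  simp only [expectation, sub_mul, trace_sub, map_sub]

lemma expectation_smul_left (r : ℝ) (ρ A : Matrix n n 𝕜) :
    expectation (r • ρ) A = r * expectation ρ A := by
  simp only [expectation, smul_mul, trace_smul, RCLike.smul_re]

lemma expectation_comm (ρ A : Matrix n n 𝕜) : expectation ρ A = expectation A ρ := by
  simp only [expectation, trace_mul_comm ρ A]

lemma expectation_sum_left {ι : Type*} (s : Finset ι) (ρ : ι → Matrix n n 𝕜) (A : Matrix n n 𝕜) :
    expectation (∑ i ∈ s, ρ i) A = ∑ i ∈ s, expectation (ρ i) A := by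
  simp only [expectation, Finset.sum_mul, trace_sum, map_sum]

lemma expectation_sub_right (ρ A B : Matrix n n 𝕜) :
    expectation ρ (A - B) = expectation ρ A - expectation ρ B := by
  simp only [expectation, mul_sub, trace_sub, map_sub]

lemma expectation_pureState (x : n → 𝕜) (A : Matrix n n 𝕜) :
    expectation (pureState x) A = RCLike.re (star x ⬝ᵥ A *ᵥ x) := by
  rw [expectation, pureState, vecMulVec_mul, trace_vecMulVec, dotProduct_comm, dotProduct_mulVec]

lemma expectation_pureState_pureState (x y : EuclideanSpace 𝕜 n) :
    expectation (pureState x.ofLp) (pureState y.ofLp) = ‖inner 𝕜 x y‖ ^ 2 := by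
  have hinner (u v : EuclideanSpace 𝕜 n) : star u.ofLp ⬝ᵥ v.ofLp = inner 𝕜 u v := by
    rw [EuclideanSpace.inner_eq_star_dotProduct, dotProduct_comm]
  rw [expectation_pureState, pureState, vecMulVec_mulVec, dotProduct_smul, hinner, hinner,
    op_smul_eq_smul, smul_eq_mul, inner_mul_symm_re_eq_norm, norm_mul, norm_inner_symm, sq]

lemma isDensityMatrix_pureState {x : EuclideanSpace 𝕜 n} (hx : ‖x‖ = 1) :
    IsDensityMatrix (pureState x.ofLp) where
  posSemidef := posSemidef_vecMulVec_self_star _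
  trace_eq_one := by
    rw [pureState, trace_vecMulVec, ← EuclideanSpace.inner_eq_star_dotProduct,
      inner_self_eq_norm_sq_to_K, hx]
    simp

lemma convex_setOf_isDensityMatrix : Convex ℝ {ρ : Matrix n n 𝕜 | IsDensityMatrix ρ} := by
  rintro ρ hρ σ hσ a b ha hb hab
  refine ⟨(hρ.posSemidef.smul ha).add (hσ.posSemidef.smul hb), ?_⟩
  rw [trace_add, trace_smul, trace_smul, hρ.trace_eq_one, hσ.trace_eq_one, ← add_smul, hab,
    one_smul]

lemma sum_pureState [DecidableEq n] (b : OrthonormalBasis n 𝕜 (EuclideanSpace 𝕜 n)) :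
    ∑ i, pureState (b i).ofLp = 1 := by
  simp only [pureState, ← InnerProductSpace.symm_toEuclideanLin_rankOne, ← map_sum]
  rw [← ContinuousLinearMap.toLinearMap_sum, b.sum_rankOne_eq_id]
  simp

lemma IsDensityMatrix.expectation_pureState_mem_stdSimplex {ρ : Matrix n n 𝕜}
    (hρ : IsDensityMatrix ρ) (b : OrthonormalBasis n 𝕜 (EuclideanSpace 𝕜 n)) :
    (fun i ↦ expectation (pureState (b i).ofLp) ρ) ∈ stdSimplex ℝ n := by
  classical
  refine ⟨fun i ↦ ?_, ?_⟩
  · exact (hρ.posSemidef.re_dotProduct_nonneg _).trans_eq (expectation_pureState _ _).symm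
  · rw [← expectation_sum_left, sum_pureState, expectation, one_mul, hρ.trace_eq_one, RCLike.one_re]

lemma isTestObservable_pureState_sub_pureState
    (b : OrthonormalBasis n 𝕜 (EuclideanSpace 𝕜 n)) (i j : n) :
    IsTestObservable (pureState (b i).ofLp - pureState (b j).ofLp) := by
  intro ρ hρ
  have hw := hρ.expectation_pureState_mem_stdSimplex b
  rw [expectation_comm, expectation_sub_left, abs_sub_le_iff]
  have hi := mem_Icc_of_mem_stdSimplex hw i
  have hj := mem_Icc_of_mem_stdSimplex hw j
  constructor <;> linarith [hi.1, hi.2, hj.1, hj.2]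

lemma outcomeProb_eq_re_trace (N ρ : Matrix n n 𝕜) :
    outcomeProb N ρ = RCLike.re (N * ρ * Nᴴ).trace := by
  rw [outcomeProb, expectation, ← Matrix.mul_assoc, trace_mul_cycle]

lemma outcomeProb_nonneg (N : Matrix n n 𝕜) {ρ : Matrix n n 𝕜} (hρ : ρ.PosSemidef) :
    0 ≤ outcomeProb N ρ := by
  rw [outcomeProb_eq_re_trace]
  exact (RCLike.nonneg_iff.mp (hρ.mul_mul_conjTranspose_same N).trace_nonneg).1

lemma mul_mul_conjTranspose_eq_zero_of_outcomeProb_eq_zero {N ρ : Matrix n n 𝕜}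
    (hρ : ρ.PosSemidef) (h : outcomeProb N ρ = 0) : N * ρ * Nᴴ = 0 := by
  have hpost := hρ.mul_mul_conjTranspose_same N
  rw [outcomeProb_eq_re_trace] at h
  refine hpost.trace_eq_zero_iff.mp (RCLike.ext ?_ ?_)
  · rw [h, map_zero]
  · rw [(RCLike.nonneg_iff.mp hpost.trace_nonneg).2, map_zero]

variable [DecidableEq n]

/-- `α`-gentleness of one outcome, with measurement operator `N`: conditioning a state on the
outcome moves it by at most `α` in trace distance. The trace norm of a Hermitian matrix is the sum
of the absolute values of its eigenvalues. -/
def IsGentle (α : ℝ) (N : Matrix n n 𝕜) : Prop :=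
  ∀ ρ : Matrix n n 𝕜, IsDensityMatrix ρ → 0 < outcomeProb N ρ →
    ∀ h : (ρ - ((1 : 𝕜) / (outcomeProb N ρ : 𝕜)) • (N * ρ * Nᴴ)).IsHermitian,
      (1 / 2 : ℝ) * ∑ i, |h.eigenvalues i| ≤ α

lemma sum_eigenvalues_smul_pureState {A : Matrix n n 𝕜} (hA : A.IsHermitian) :
    ∑ i, hA.eigenvalues i • pureState (hA.eigenvectorBasis i).ofLp = A := by
  conv_rhs => rw [← mul_one A, ← sum_pureState hA.eigenvectorBasis, Finset.mul_sum]
  simp only [pureState, mul_vecMulVec, hA.mulVec_eigenvectorBasis, smul_vecMulVec]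

lemma expectation_eq_sum_eigenvalues {A : Matrix n n 𝕜} (hA : A.IsHermitian) (B : Matrix n n 𝕜) :
    expectation A B =
      ∑ i, hA.eigenvalues i * expectation (pureState (hA.eigenvectorBasis i).ofLp) B := by
  conv_lhs => rw [← sum_eigenvalues_smul_pureState hA]
  simp only [expectation_sum_left, expectation_smul_left]

lemma IsDensityMatrix.expectation_mem_of_convex {ρ A : Matrix n n 𝕜} (hρ : IsDensityMatrix ρ)
    (hA : A.IsHermitian) {S : Set ℝ} (hS : Convex ℝ S) (h : ∀ i, hA.eigenvalues i ∈ S) :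
    expectation ρ A ∈ S := by
  have hw := hρ.expectation_pureState_mem_stdSimplex hA.eigenvectorBasis
  rw [expectation_comm, expectation_eq_sum_eigenvalues hA]
  simpa only [smul_eq_mul, mul_comm] using
    hS.sum_mem (t := Finset.univ) (fun i _ ↦ hw.1 i) hw.2 fun i _ ↦ h i

lemma expectation_le_mul_expectation {ρ₁ ρ₂ A : Matrix n n 𝕜} (hρ₁ : IsDensityMatrix ρ₁)
    (hρ₂ : IsDensityMatrix ρ₂) (hA : A.IsHermitian) {c : ℝ}
    (h : ∀ i j, hA.eigenvalues i ≤ c * hA.eigenvalues j) :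
    expectation ρ₁ A ≤ c * expectation ρ₂ A :=
  hρ₂.expectation_mem_of_convex hA (convex_halfSpace_ge (IsLinearMap.isLinearMap_smul c) _) fun j ↦
    hρ₁.expectation_mem_of_convex hA (convex_Iic _) fun i ↦ h i j

lemma IsTestObservable.abs_expectation_le {A W : Matrix n n 𝕜} (hW : IsTestObservable W)
    (hA : A.IsHermitian) : |expectation A W| ≤ ∑ i, |hA.eigenvalues i| := by
  rw [expectation_eq_sum_eigenvalues hA]
  refine (Finset.abs_sum_le_sum_abs _ _).trans (Finset.sum_le_sum fun i _ ↦ ?_)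
  rw [abs_mul]
  exact mul_le_of_le_one_right (abs_nonneg _)
    (hW _ (isDensityMatrix_pureState (hA.eigenvectorBasis.norm_eq_one i)))

lemma IsGentle.abs_outcomeProb_mul_expectation_sub_le {α : ℝ} {N W ρ : Matrix n n 𝕜}
    (hN : IsGentle α N) (hW : IsTestObservable W) (hρ : IsDensityMatrix ρ) :
    |outcomeProb N ρ * expectation ρ W - expectation (N * ρ * Nᴴ) W| ≤ 2 * α * outcomeProb N ρ := by
  rcases (outcomeProb_nonneg N hρ.posSemidef).eq_or_lt' with hp | hp
  · rw [hp, mul_mul_conjTranspose_eq_zero_of_outcomeProb_eq_zero hρ.posSemidef hp]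
    simp [expectation]
  set p := outcomeProb N ρ
  have hscalar : (1 : 𝕜) / (p : 𝕜) = ((p⁻¹ : ℝ) : 𝕜) := by simp
  have hH : (ρ - ((1 : 𝕜) / (p : 𝕜)) • (N * ρ * Nᴴ)).IsHermitian := by
    rw [hscalar, ← RCLike.real_smul_eq_coe_smul]
    exact hρ.posSemidef.1.sub ((hρ.posSemidef.mul_mul_conjTranspose_same N).1.smul (.all _))
  have hdist := (hW.abs_expectation_le hH).trans (by linarith [hN ρ hρ hp hH] : _ ≤ 2 * α)
  rw [hscalar, ← RCLike.real_smul_eq_coe_smul, expectation_sub_left, expectation_smul_left] at hdist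
  calc |p * expectation ρ W - expectation (N * ρ * Nᴴ) W|
      = p * |expectation ρ W - p⁻¹ * expectation (N * ρ * Nᴴ) W| := by
        rw [← abs_of_pos hp, ← abs_mul, abs_of_pos hp, mul_sub, mul_inv_cancel_left₀ hp.ne']
    _ ≤ 2 * α * p := by rw [mul_comm (2 * α)]; gcongr

lemma IsGentle.mul_outcomeProb_sub_le {α q : ℝ} {N W ρ₁ ρ₂ : Matrix n n 𝕜} (hN : IsGentle α N)
    (hW : IsTestObservable W) (hρ₁ : IsDensityMatrix ρ₁) (hρ₂ : IsDensityMatrix ρ₂)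
    (hW₁ : expectation ρ₁ W = 1) (hW₂ : expectation ρ₂ W = -1) (hq : q ∈ Set.Icc (0 : ℝ) 1) :
    q * (1 - q) * (outcomeProb N ρ₁ - outcomeProb N ρ₂) ≤
      2 * α * (q * outcomeProb N ρ₁ + (1 - q) * outcomeProb N ρ₂) := by
  have hq' : 0 ≤ 1 - q := sub_nonneg.mpr hq.2
  have hmix : IsDensityMatrix (q • ρ₁ + (1 - q) • ρ₂) :=
    convex_setOf_isDensityMatrix hρ₁ hρ₂ hq.1 hq' (add_sub_cancel q 1)
  have hpost : N * (q • ρ₁ + (1 - q) • ρ₂) * Nᴴ =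
      q • (N * ρ₁ * Nᴴ) + (1 - q) • (N * ρ₂ * Nᴴ) := by
    simp only [mul_add, add_mul, mul_smul_comm, smul_mul_assoc]
  have hprob : outcomeProb N (q • ρ₁ + (1 - q) • ρ₂) =
      q * outcomeProb N ρ₁ + (1 - q) * outcomeProb N ρ₂ := by
    simp only [outcomeProb, expectation_add_left, expectation_smul_left]
  have hsplit : 2 * (q * (1 - q) * (outcomeProb N ρ₁ - outcomeProb N ρ₂)) =
      q * (outcomeProb N ρ₁ * expectation ρ₁ W - expectation (N * ρ₁ * Nᴴ) W) +
      (1 - q) * (outcomeProb N ρ₂ * expectation ρ₂ W - expectation (N * ρ₂ * Nᴴ) W) -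
      (outcomeProb N (q • ρ₁ + (1 - q) • ρ₂) * expectation (q • ρ₁ + (1 - q) • ρ₂) W -
        expectation (N * (q • ρ₁ + (1 - q) • ρ₂) * Nᴴ) W) := by
    rw [hpost, hprob]
    simp only [expectation_add_left, expectation_smul_left, hW₁, hW₂]
    ring
  have hdisp {ρ : Matrix n n 𝕜} (hρ : IsDensityMatrix ρ) :=
    abs_le.mp (hN.abs_outcomeProb_mul_expectation_sub_le hW hρ)
  have h₁ := mul_le_mul_of_nonneg_left (hdisp hρ₁).2 hq.1
  have h₂ := mul_le_mul_of_nonneg_left (hdisp hρ₂).2 hq'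
  have h := (hdisp hmix).1
  rw [hprob] at h hsplit
  linarith

lemma IsGentle.eigenvalues_le {α : ℝ} {N : Matrix n n 𝕜} (hN : IsGentle α N) (hα0 : 0 ≤ α)
    (hα1 : α < 1 / 2) (i j : n) :
    (isHermitian_conjTranspose_mul_self N).eigenvalues i ≤
      ((1 + 2 * α) / (1 - 2 * α)) ^ 2 * (isHermitian_conjTranspose_mul_self N).eigenvalues j := by
  set hE := isHermitian_conjTranspose_mul_self N
  have hnonneg := (posSemidef_conjTranspose_mul_self N).eigenvalues_nonneg j
  rcases eq_or_ne i j with rfl | hij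
  · have hratio : 1 ≤ (1 + 2 * α) / (1 - 2 * α) := by
      rw [one_le_div₀ (by linarith)]
      linarith
    exact le_mul_of_one_le_left hnonneg (one_le_pow₀ hratio)
  set b := hE.eigenvectorBasis
  have hstate (k : n) : IsDensityMatrix (pureState (b k).ofLp) :=
    isDensityMatrix_pureState (b.norm_eq_one k)
  have hprob (k : n) : outcomeProb N (pureState (b k).ofLp) = hE.eigenvalues k := by
    rw [outcomeProb, expectation_pureState, hE.eigenvalues_eq]
  have hW (k : n) :
      expectation (pureState (b k).ofLp) (pureState (b i).ofLp - pureState (b j).ofLp) =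
        ‖inner 𝕜 (b k) (b i)‖ ^ 2 - ‖inner 𝕜 (b k) (b j)‖ ^ 2 := by
    rw [expectation_sub_right, expectation_pureState_pureState, expectation_pureState_pureState]
  rw [← hprob i, ← hprob j]
  refine le_sq_mul_of_forall_mul_sub_le (outcomeProb_nonneg N (hstate j).posSemidef) (by linarith)
    fun q hq ↦ hN.mul_outcomeProb_sub_le (isTestObservable_pureState_sub_pureState b i j) (hstate i)
      (hstate j) ?_ ?_ hq
  · simp [hW, b.inner_eq_ite, hij]
  · simp [hW, b.inner_eq_ite, hij.symm]

theorem gentle_implies_qdp_general {α : ℝ} (hα0 : 0 ≤ α) (hα1 : α < 1 / 2) {N : Matrix n n 𝕜}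
    (hN : IsGentle α N) {ρ₁ ρ₂ : Matrix n n 𝕜} (hρ₁ : IsDensityMatrix ρ₁)
    (hρ₂ : IsDensityMatrix ρ₂) :
    outcomeProb N ρ₁ ≤
      Real.exp (2 * Real.log ((1 + 2 * α) / (1 - 2 * α))) * outcomeProb N ρ₂ := by
  have hratio : 0 < (1 + 2 * α) / (1 - 2 * α) := div_pos (by linarith) (by linarith)
  have hexp : Real.exp (2 * Real.log ((1 + 2 * α) / (1 - 2 * α))) =
      ((1 + 2 * α) / (1 - 2 * α)) ^ 2 := by
    rw [two_mul, Real.exp_add, Real.exp_log hratio, sq]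
  rw [hexp]
  exact expectation_le_mul_expectation hρ₁ hρ₂ _ (hN.eigenvalues_le hα0 hα1)

end QuantumStates

/-- For α ∈ [0, 1/2), an α-gentle measurement is
δ-quantum-differentially-private with δ = 2 log((1+2α)/(1−2α)). -/
theorem gentle_implies_qdp
    {d : ℕ} (hd : 0 < d) {Y : Type*} [Fintype Y]
    (M : Y → Matrix (Fin d) (Fin d) ℂ)
    (hcomplete : ∑ y, (M y)ᴴ * M y = 1)
    (α : ℝ) (hα0 : 0 ≤ α) (hα1 : α < 1 / 2)
    (hgentle : ∀ ρ : Matrix (Fin d) (Fin d) ℂ, ρ.PosSemidef → ρ.trace = 1 →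
      ∀ y : Y, ∀ p : ℝ, p = (ρ * ((M y)ᴴ * M y)).trace.re → 0 < p →
      ∀ h : (ρ - ((1 : ℂ) / (p : ℂ)) • (M y * ρ * (M y)ᴴ)).IsHermitian,
        (1 / 2 : ℝ) * ∑ i, |h.eigenvalues i| ≤ α) :
    ∀ y, ∀ ρ₁ ρ₂ : Matrix (Fin d) (Fin d) ℂ,
      ρ₁.PosSemidef → ρ₁.trace = 1 → ρ₂.PosSemidef → ρ₂.trace = 1 →
      (ρ₁ * ((M y)ᴴ * M y)).trace.re ≤
        Real.exp (2 * Real.log ((1 + 2 * α) / (1 - 2 * α))) *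
          (ρ₂ * ((M y)ᴴ * M y)).trace.re := by
  intro y ρ₁ ρ₂ hρ₁ htr₁ hρ₂ htr₂
  exact gentle_implies_qdp_general hα0 hα1
    (fun ρ hρ hp ↦ hgentle ρ hρ.posSemidef hρ.trace_eq_one y _ rfl hp) ⟨hρ₁, htr₁⟩ ⟨hρ₂, htr₂⟩
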